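/- arXiv:2302.08462 — 2 statements merged into one kernel-verified Lean document; each statement's English description precedes it below -/
import Mathlib

section
/- Let d ≥ 1, let Ω ⊆ ℝ^d be a nonempty bounded open set, let u : closure(Ω) → ℝ be bounded, and let ε > 0. Then for every x ∈ Ω_{2ε} one has −ε² Δ_∞^ε (u^ε)(x) ≤ 2 u^ε(x) − u^{2ε}(x) − u(x), where Δ_∞^ε is applied to the function u^ε defined on Ω_ε. -/
open Metric Real Set Filter

noncomputable section

/-- The inner parallel set `Ω_ε = {x ∈ Ω : dist(x, ∂Ω) > ε}`. -/
def innerSet {d : ℕ} (Ω : Set (EuclideanSpace ℝ (Fin d))) (ε : ℝ) :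
    Set (EuclideanSpace ℝ (Fin d)) :=
  {x ∈ Ω | ε < Metric.infDist x (frontier Ω)}

/-- Upper envelope `u^ε(x) = sup_{y ∈ B(x;ε)} u(y)`. -/
def upperEnv {d : ℕ} (u : EuclideanSpace ℝ (Fin d) → ℝ) (ε : ℝ)
    (x : EuclideanSpace ℝ (Fin d)) : ℝ :=
  sSup (u '' Metric.closedBall x ε)

/-- Lower envelope `u_ε(x) = inf_{y ∈ B(x;ε)} u(y)`. -/
def lowerEnv {d : ℕ} (u : EuclideanSpace ℝ (Fin d) → ℝ) (ε : ℝ)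
    (x : EuclideanSpace ℝ (Fin d)) : ℝ :=
  sInf (u '' Metric.closedBall x ε)

/-- Finite-difference infinity-Laplacian `Δ_∞^ε u(x) = (u^ε(x) + u_ε(x) - 2u(x))/ε²`. -/
def nlInfLap {d : ℕ} (u : EuclideanSpace ℝ (Fin d) → ℝ) (ε : ℝ)
    (x : EuclideanSpace ℝ (Fin d)) : ℝ :=
  (upperEnv u ε x + lowerEnv u ε x - 2 * u x) / ε ^ 2

/-- Lower ε-slope `S_-^ε u(x) = (u(x) - u_ε(x))/ε`. -/
def lowerSlope {d : ℕ} (u : EuclideanSpace ℝ (Fin d) → ℝ) (ε : ℝ)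
    (x : EuclideanSpace ℝ (Fin d)) : ℝ :=
  (u x - lowerEnv u ε x) / ε

/-- Supremum norm of `u` over the set `S`. -/
def supNorm {d : ℕ} (S : Set (EuclideanSpace ℝ (Fin d)))
    (u : EuclideanSpace ℝ (Fin d) → ℝ) : ℝ :=
  sSup ((fun x => |u x|) '' S)

/-- `u` satisfies comparison with `β`-cones on `Ω`. -/
def ComparisonWithCones {d : ℕ} (Ω : Set (EuclideanSpace ℝ (Fin d))) (β : ℝ)
    (u : EuclideanSpace ℝ (Fin d) → ℝ) : Prop :=
  ∀ D : Set (EuclideanSpace ℝ (Fin d)), IsOpen D → closure D ⊆ Ω →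
    ∀ a : ℝ, 0 ≤ a → ∀ x₀ : EuclideanSpace ℝ (Fin d), x₀ ∉ D → ∀ x ∈ D,
      sInf ((fun ξ => u ξ - a * ‖ξ - x₀‖ ^ β) '' frontier D) ≤ u x - a * ‖x - x₀‖ ^ β ∧
      u x - a * ‖x - x₀‖ ^ β ≤ sSup ((fun ξ => u ξ - a * ‖ξ - x₀‖ ^ β) '' frontier D)

/-- A closed ball of radius less than the distance of its center to `∂Ω` is contained in `Ω`. -/
lemma closedBall_subset_of_mem_innerSet {d : ℕ} {Ω : Set (EuclideanSpace ℝ (Fin d))} {r : ℝ}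
    (hr : 0 ≤ r) {x : EuclideanSpace ℝ (Fin d)} (hx : x ∈ innerSet Ω r) :
    closedBall x r ⊆ Ω := by
  have hcover : closedBall x r ⊆ interior Ω ∪ (closure Ω)ᶜ := by
    intro z hz
    by_contra h
    rw [mem_union, mem_compl_iff, not_or, not_not] at h
    have hdist := infDist_le_dist_of_mem (x := x) (show z ∈ frontier Ω from ⟨h.2, h.1⟩)
    rw [mem_closedBall, dist_comm] at hz
    linarith [hx.2]
  have hxball : x ∈ closedBall x r := mem_closedBall_self hr
  have hxint : x ∈ interior Ω :=
    (hcover hxball).resolve_right fun h => h (subset_closure hx.1)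
  exact ((convex_closedBall x r).isPreconnected.subset_left_of_subset_union isOpen_interior
    isClosed_closure.isOpen_compl
    (disjoint_compl_right.mono_left (interior_subset.trans subset_closure)) hcover
    ⟨x, hxball, hxint⟩).trans interior_subset

/-- Every point of a ball of radius `2ε` lies within `ε` of a point of the concentric ball of
radius `ε`. -/
lemma exists_mem_closedBall_of_mem_closedBall_two_mul {E : Type*} [NormedAddCommGroup E]
    [NormedSpace ℝ E] {x y : E} {ε : ℝ} (hy : y ∈ closedBall x (2 * ε)) :
    ∃ z ∈ closedBall x ε, y ∈ closedBall z ε := by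
  rw [mem_closedBall, dist_comm] at hy
  refine ⟨midpoint ℝ x y, ?_, ?_⟩
  · rw [mem_closedBall, dist_midpoint_left, Real.norm_ofNat]
    linarith
  · rw [mem_closedBall, dist_comm, dist_midpoint_right, Real.norm_ofNat]
    linarith

/-- the elementary estimate
`−ε² Δ_∞^ε (u^ε)(x) ≤ 2 u^ε(x) − u^{2ε}(x) − u(x)` for bounded `u`. -/
theorem stmt1 {d : ℕ} (hd : 1 ≤ d) (Ω : Set (EuclideanSpace ℝ (Fin d)))
    (hΩne : Ω.Nonempty) (hΩb : Bornology.IsBounded Ω) (hΩo : IsOpen Ω)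
    (u : EuclideanSpace ℝ (Fin d) → ℝ)
    (hu : Bornology.IsBounded (u '' closure Ω))
    (ε : ℝ) (hε : 0 < ε)
    (x : EuclideanSpace ℝ (Fin d)) (hx : x ∈ innerSet Ω (2 * ε)) :
    -(ε ^ 2 * nlInfLap (upperEnv u ε) ε x) ≤
      2 * upperEnv u ε x - upperEnv u (2 * ε) x - u x := by
  have hball : closedBall x (2 * ε) ⊆ closure Ω :=
    (closedBall_subset_of_mem_innerSet (by positivity) hx).trans subset_closure
  have hsub : ∀ z ∈ closedBall x ε, closedBall z ε ⊆ closedBall x (2 * ε) := fun z hz =>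
    closedBall_subset_closedBall' (by rw [mem_closedBall] at hz; linarith)
  have hbdd : BddAbove (u '' closedBall x (2 * ε)) := hu.bddAbove.mono (image_mono hball)
  have hle : ∀ z ∈ closedBall x ε, ∀ y ∈ closedBall z ε, u y ≤ upperEnv u ε z :=
    fun z hz y hy => le_csSup (hbdd.mono (image_mono (hsub z hz))) (mem_image_of_mem u hy)
  have henv : BddAbove (upperEnv u ε '' closedBall x ε) := by
    refine ⟨upperEnv u (2 * ε) x, ?_⟩
    rintro _ ⟨z, hz, rfl⟩
    exact csSup_le_csSup hbdd ((nonempty_closedBall.2 hε.le).image u) (image_mono (hsub z hz))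
  have hupper : upperEnv u (2 * ε) x ≤ upperEnv (upperEnv u ε) ε x := by
    refine csSup_le ((nonempty_closedBall.2 (by positivity)).image u) ?_
    rintro _ ⟨y, hy, rfl⟩
    obtain ⟨z, hz, hyz⟩ := exists_mem_closedBall_of_mem_closedBall_two_mul hy
    exact (hle z hz y hyz).trans (le_csSup henv (mem_image_of_mem _ hz))
  have hlower : u x ≤ lowerEnv (upperEnv u ε) ε x := by
    refine le_csInf ((nonempty_closedBall.2 hε.le).image _) ?_
    rintro _ ⟨z, hz, rfl⟩
    exact hle z hz x (mem_closedBall_comm.1 hz)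
  rw [nlInfLap, mul_div_cancel₀ _ (by positivity : ε ^ 2 ≠ 0)]
  linarith
end
end

section
/- (Lemma 3.4, perturbation to a strict supersolution.) Let d ≥ 1, let Ω ⊆ ℝ^d be a bounded open set, let ε > 0 with Ω_ε nonempty, and let v : closure(Ω_ε) → ℝ be continuous with −Δ_∞^ε v(x) ≥ 0 for all x ∈ Ω_{2ε}. Then for every δ ≥ 0 with 4δ‖v‖_∞ ≤ 1 there exists a function w : closure(Ω_ε) → ℝ such that −Δ_∞^ε w(x) ≥ −Δ_∞^ε v(x) + δ (S_-^ε v(x))² for all x ∈ Ω_{2ε}, and ‖v − w‖_∞ ≤ 3 ‖v‖_∞² δ. -/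
open Metric Real Set Filter

noncomputable section

theorem closedBall_subset_innerSet {d : ℕ} {Ω : Set (EuclideanSpace ℝ (Fin d))} {r s : ℝ}
    {x : EuclideanSpace ℝ (Fin d)} (hr : 0 ≤ r) (hs : 0 ≤ s) (hx : x ∈ innerSet Ω (r + s)) :
    closedBall x r ⊆ innerSet Ω s := by
  obtain ⟨hxΩ, hxd⟩ := hx
  have far : ∀ y ∈ closedBall x r, s < infDist y (frontier Ω) := by
    intro y hy
    have h1 : infDist x (frontier Ω) ≤ infDist y (frontier Ω) + dist x y :=
      infDist_le_infDist_add_dist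
    rw [mem_closedBall, dist_comm] at hy
    linarith
  intro y hy
  refine ⟨?_, far y hy⟩
  by_contra hyΩ
  have hcover : ∀ z ∈ closedBall x r, z ∈ interior Ω ∨ z ∈ (closure Ω)ᶜ := by
    intro z hz
    by_contra! hcon
    have hzf : z ∈ frontier Ω := ⟨notMem_compl_iff.1 hcon.2, hcon.1⟩
    have h := far z hz
    rw [infDist_zero_of_mem hzf] at h
    linarith
  have hxB : x ∈ closedBall x r := mem_closedBall_self hr
  obtain ⟨z, -, hzi, hzc⟩ := (convex_closedBall x r).isPreconnected (interior Ω) (closure Ω)ᶜ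
    isOpen_interior isClosed_closure.isOpen_compl hcover
    ⟨x, hxB, (hcover x hxB).resolve_right fun h => h (subset_closure hxΩ)⟩
    ⟨y, hy, (hcover y hy).resolve_left fun h => hyΩ (interior_subset h)⟩
  exact hzc (subset_closure (interior_subset hzi))

theorem upperEnv_eq_of_isMaxOn {d : ℕ} {u : EuclideanSpace ℝ (Fin d) → ℝ} {ε : ℝ}
    {x y : EuclideanSpace ℝ (Fin d)} (hy : y ∈ closedBall x ε)
    (h : IsMaxOn u (closedBall x ε) y) : upperEnv u ε x = u y :=
  IsGreatest.csSup_eq ⟨mem_image_of_mem u hy, forall_mem_image.2 fun _ hz => h hz⟩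

theorem lowerEnv_eq_of_isMinOn {d : ℕ} {u : EuclideanSpace ℝ (Fin d) → ℝ} {ε : ℝ}
    {x y : EuclideanSpace ℝ (Fin d)} (hy : y ∈ closedBall x ε)
    (h : IsMinOn u (closedBall x ε) y) : lowerEnv u ε x = u y :=
  IsLeast.csInf_eq ⟨mem_image_of_mem u hy, forall_mem_image.2 fun _ hz => h hz⟩

theorem abs_le_supNorm {d : ℕ} {S : Set (EuclideanSpace ℝ (Fin d))}
    {u : EuclideanSpace ℝ (Fin d) → ℝ} (hS : IsCompact S) (hu : ContinuousOn u S)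
    {x : EuclideanSpace ℝ (Fin d)} (hx : x ∈ S) : |u x| ≤ supNorm S u :=
  le_csSup (hS.bddAbove_image hu.abs) (mem_image_of_mem (fun x => |u x|) hx)

theorem monotoneOn_quadratic_perturbation {δ M : ℝ} (hδ : 0 ≤ δ) :
    MonotoneOn (fun t : ℝ => (1 + 2 * δ * M) * t - δ * t ^ 2) (Iic M) := by
  intro s hs t ht hst
  rw [mem_Iic] at hs ht
  have h : 0 ≤ δ * ((t - s) * (2 * M - s - t)) :=
    mul_nonneg hδ (mul_nonneg (by linarith) (by linarith))
  dsimp only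
  linarith

/-- Lemma 3.4: perturbation to a strict supersolution. -/
theorem stmt7 {d : ℕ} (hd : 1 ≤ d) (Ω : Set (EuclideanSpace ℝ (Fin d)))
    (hΩb : Bornology.IsBounded Ω) (hΩo : IsOpen Ω)
    (ε : ℝ) (hε : 0 < ε) (hne : (innerSet Ω ε).Nonempty)
    (v : EuclideanSpace ℝ (Fin d) → ℝ)
    (hv : ContinuousOn v (closure (innerSet Ω ε)))
    (hsup : ∀ x ∈ innerSet Ω (2 * ε), 0 ≤ -(nlInfLap v ε x))
    (δ : ℝ) (hδ : 0 ≤ δ)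
    (hδ2 : 4 * δ * supNorm (closure (innerSet Ω ε)) v ≤ 1) :
    ∃ w : EuclideanSpace ℝ (Fin d) → ℝ,
      (∀ x ∈ innerSet Ω (2 * ε),
        -(nlInfLap v ε x) + δ * (lowerSlope v ε x) ^ 2 ≤ -(nlInfLap w ε x)) ∧
      supNorm (closure (innerSet Ω ε)) (fun x => v x - w x) ≤
        3 * (supNorm (closure (innerSet Ω ε)) v) ^ 2 * δ := by
  set S := closure (innerSet Ω ε)
  set M := supNorm S v
  have hS : IsCompact S := (hΩb.subset fun _ hx => hx.1).isCompact_closure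
  have hvM : ∀ x ∈ S, |v x| ≤ M := fun x hx => abs_le_supNorm hS hv hx
  set φ : ℝ → ℝ := fun t => (1 + 2 * δ * M) * t - δ * t ^ 2 with hφ
  have hmono : MonotoneOn φ (Iic M) := monotoneOn_quadratic_perturbation hδ
  refine ⟨fun x => φ (v x), fun x hx => ?_, ?_⟩
  · have hball : closedBall x ε ⊆ S :=
      (closedBall_subset_innerSet hε.le hε.le (two_mul ε ▸ hx)).trans subset_closure
    have hxB : x ∈ closedBall x ε := mem_closedBall_self hε.le
    have hmem : ∀ y ∈ closedBall x ε, v y ∈ Iic M :=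
      fun y hy => (abs_le.1 (hvM y (hball hy))).2
    obtain ⟨y, hy, hymax⟩ := (isCompact_closedBall x ε).exists_isMaxOn ⟨x, hxB⟩ (hv.mono hball)
    obtain ⟨z, hz, hzmin⟩ := (isCompact_closedBall x ε).exists_isMinOn ⟨x, hxB⟩ (hv.mono hball)
    have hymax' : IsMaxOn (fun x => φ (v x)) (closedBall x ε) y :=
      fun t ht => hmono (hmem t ht) (hmem y hy) (hymax ht)
    have hzmin' : IsMinOn (fun x => φ (v x)) (closedBall x ε) z :=
      fun t ht => hmono (hmem z hz) (hmem t ht) (hzmin ht)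
    have hlap := hsup x hx
    simp only [nlInfLap, lowerSlope, upperEnv_eq_of_isMaxOn hy hymax,
      lowerEnv_eq_of_isMinOn hz hzmin, upperEnv_eq_of_isMaxOn hy hymax',
      lowerEnv_eq_of_isMinOn hz hzmin'] at hlap ⊢
    have hε2 : 0 < ε ^ 2 := by positivity
    have hconc : 0 ≤ 2 * v x - v y - v z := by
      rw [← neg_div, le_div_iff₀ hε2] at hlap
      linarith
    have hxM : v x ≤ M := hmem x hxB
    have hcross : 0 ≤ δ * ((M - v x) * (2 * v x - v y - v z)) :=
      mul_nonneg hδ (mul_nonneg (by linarith) hconc)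
    have hsq : 0 ≤ δ * (v y - v x) ^ 2 := by positivity
    rw [← neg_div, ← neg_div, div_pow, ← mul_div_assoc, ← add_div,
      div_le_div_iff_of_pos_right hε2]
    simp only [hφ]
    linarith
  · refine csSup_le ((hne.mono subset_closure).image _) (forall_mem_image.2 fun x hx => ?_)
    obtain ⟨hlo, hhi⟩ := abs_le.1 (hvM x hx)
    have hupp : 0 ≤ δ * ((M + v x) * (3 * M - v x)) :=
      mul_nonneg hδ (mul_nonneg (by linarith) (by linarith))
    have hsqM : 0 ≤ δ * (M - v x) ^ 2 := by positivity
    have hMM : 0 ≤ δ * M ^ 2 := by positivity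
    simp only [hφ]
    rw [abs_le]
    constructor <;> linarith
end
end
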